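/- arXiv:math/0605712 — 2 statements merged into one kernel-verified Lean document; each statement's English description precedes it below -/
import Mathlib

section
/- Let R be a ring such that every injective left R-module has projective dimension at most 1. Then every left R-module of finite injective dimension has projective dimension at most 1. (This is the dual half of the assertion that over a Gorenstein ring of Gorenstein dimension at most 1 every module of finite injective dimension satisfies both proj-dim ≤ 1 and inj-dim ≤ 1.) -/
open CategoryTheory

universe u

/-- The `n`-th Ext group `Ext^n_R(X, Y)` of two `R`-modules, computed in the abelian
category of (left) `R`-modules. -/
noncomputable abbrev ExtGroup (R : Type u) [Ring R] (X Y : ModuleCat.{u} R) (n : ℕ) :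
    ModuleCat ℤ :=
  ((Ext ℤ (ModuleCat.{u} R) n).obj (Opposite.op X)).obj Y

/-- A module `M` has projective dimension at most `n` if `Ext^i_R(M, N) = 0`
for every module `N` and every `i > n`. -/
def ProjDimLE (R : Type u) [Ring R] (n : ℕ) (M : ModuleCat.{u} R) : Prop :=
  ∀ (N : ModuleCat.{u} R) (i : ℕ), n < i → Subsingleton (ExtGroup R M N i)

/-- A module `M` has injective dimension at most `n` if `Ext^i_R(N, M) = 0`
for every module `N` and every `i > n`. -/
def InjDimLE (R : Type u) [Ring R] (n : ℕ) (M : ModuleCat.{u} R) : Prop :=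
  ∀ (N : ModuleCat.{u} R) (i : ℕ), n < i → Subsingleton (ExtGroup R N M i)

/-- Vanishing of the derived-functor Ext agrees with vanishing of Mathlib's `Abelian.Ext`. -/
lemma extGroup_subsingleton_iff (R : Type u) [Ring R] (X Y : ModuleCat.{u} R) (n : ℕ) :
    Subsingleton (ExtGroup R X Y (n + 1)) ↔
      Subsingleton (CategoryTheory.Abelian.Ext.{u} X Y (n + 1)) := by
  let P := projectiveResolution X
  have h1 : Subsingleton (ExtGroup R X Y (n + 1)) ↔
      ∀ f : P.complex.X (n + 1) ⟶ Y, P.complex.d (n + 2) (n + 1) ≫ f = 0 →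
        ∃ g : P.complex.X n ⟶ Y, P.complex.d (n + 1) n ≫ g = f := by
    rw [← ModuleCat.isZero_iff_subsingleton, (P.isoExt (R := ℤ) (n + 1) Y).isZero_iff,
      ← HomologicalComplex.exactAt_iff_isZero_homology,
      HomologicalComplex.exactAt_iff' _ n (n + 1) (n + 2) (by simp) (by simp),
      ShortComplex.moduleCat_exact_iff]
    exact Iff.rfl
  have h2 : Subsingleton (CategoryTheory.Abelian.Ext.{u} X Y (n + 1)) ↔
      ∀ f : P.complex.X (n + 1) ⟶ Y, P.complex.d (n + 2) (n + 1) ≫ f = 0 →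
        ∃ g : P.complex.X n ⟶ Y, P.complex.d (n + 1) n ≫ g = f := by
    constructor
    · intro h f hf
      exact (P.extMk_eq_zero_iff f (n + 2) rfl hf n rfl).1 (Subsingleton.elim _ _)
    · intro h
      refine subsingleton_of_forall_eq 0 fun e => ?_
      obtain ⟨f, hf, rfl⟩ := P.extMk_surjective e (n + 2) rfl
      exact (P.extMk_eq_zero_iff f (n + 2) rfl hf n rfl).2 (h f hf)
  rw [h1, h2]

lemma projDimLE_iff (R : Type u) [Ring R] (n : ℕ) (M : ModuleCat.{u} R) :
    ProjDimLE R n M ↔ HasProjectiveDimensionLT M (n + 1) := by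
  rw [hasProjectiveDimensionLT_iff.{u}]
  constructor
  · rintro h (_ | i) hi Y e
    · omega
    · have := (extGroup_subsingleton_iff R M Y i).1 (h Y (i + 1) hi)
      exact Subsingleton.elim _ _
  · rintro h Y (_ | i) hi
    · omega
    · exact (extGroup_subsingleton_iff R M Y i).2 (subsingleton_of_forall_eq 0 fun e => h (i + 1) hi e)

lemma injDimLE_iff (R : Type u) [Ring R] (n : ℕ) (M : ModuleCat.{u} R) :
    InjDimLE R n M ↔ HasInjectiveDimensionLT M (n + 1) := by
  rw [hasInjectiveDimensionLT_iff.{u}]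
  constructor
  · rintro h (_ | i) hi Y e
    · omega
    · have := (extGroup_subsingleton_iff R Y M i).1 (h Y (i + 1) hi)
      exact Subsingleton.elim _ _
  · rintro h Y (_ | i) hi
    · omega
    · exact (extGroup_subsingleton_iff R Y M i).2 (subsingleton_of_forall_eq 0 fun e => h (i + 1) hi e)

/-- If every injective left `R`-module has projective dimension at most 1, then every
left `R`-module of finite injective dimension has projective dimension at most 1. -/
theorem projDimLEOne_of_finite_injDim (R : Type u) [Ring R]
    (hinj : ∀ I : ModuleCat.{u} R, Injective I → ProjDimLE R 1 I)
    (M : ModuleCat.{u} R) (hM : ∃ m : ℕ, InjDimLE R m M) :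
    ProjDimLE R 1 M := by
  obtain ⟨m, hm⟩ := hM
  rw [injDimLE_iff] at hm
  rw [projDimLE_iff]
  induction m generalizing M with
  | zero =>
    exact (projDimLE_iff R 1 M).1 (hinj M (injective_iff_hasInjectiveDimensionLT_one.2 hm))
  | succ m ih =>
    have hS : (ShortComplex.mk (Injective.ι M) (Limits.cokernel.π (Injective.ι M))
        (by simp)).ShortExact := { exact := ShortComplex.exact_cokernel _ }
    have hI : Injective (Injective.under M) := inferInstance
    have h3 := ih _ ((hS.hasInjectiveDimensionLT_X₃_iff m hI).2 hm)
    exact hS.hasProjectiveDimensionLT_X₁ 2 ((projDimLE_iff R 1 _).1 (hinj _ hI))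
      (hasProjectiveDimensionLT_of_ge _ 2 3 (by omega))
end

section
/- Let R be a ring such that every projective left R-module has injective dimension at most 1 and every injective left R-module has projective dimension at most 1, let J be the Jacobson radical of R, and let P be a projective left R-module. Then either the submodule J•P is projective, or the quotient module P/J•P has infinite projective dimension and infinite injective dimension (i.e., P/J•P has neither finite projective nor finite injective dimension). -/
open CategoryTheory

universe u

/-- The submodule `J • P` of a module `P`, where `J` is the Jacobson radical of `R`
(the intersection of the maximal left ideals): the submodule generated by the
elements `j • p` with `j ∈ J`, `p ∈ P`. -/
def radSMul (R : Type u) [Ring R] (P : Type u) [AddCommGroup P] [Module R P] :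
    Submodule R P :=
  Submodule.span R {x : P | ∃ j ∈ (⊥ : Ideal R).jacobson, ∃ p : P, j • p = x}

namespace RadAux

open CategoryTheory Limits Abelian

universe v

variable {R : Type v} [Ring R]

/-- Vanishing of the classical `Ext` gives vanishing of the derived category `Ext`. -/
lemma subsingleton_ext [HasExt.{v} (ModuleCat.{v} R)] (X Y : ModuleCat.{v} R) (n : ℕ)
    (h : Subsingleton (ExtGroup R X Y (n + 1))) : Subsingleton (Abelian.Ext X Y (n + 1)) := by
  let Q : ProjectiveResolution X := ProjectiveResolution.of X
  have hz : IsZero (((_root_.Ext ℤ (ModuleCat.{v} R) (n + 1)).obj (Opposite.op X)).obj Y) :=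
    ModuleCat.isZero_of_subsingleton _
  have hz2 := hz.of_iso (Q.isoExt (R := ℤ) (n + 1) Y).symm
  rw [← HomologicalComplex.exactAt_iff_isZero_homology,
    HomologicalComplex.exactAt_iff' _ n (n + 1) (n + 2) (by simp) (by simp),
    ShortComplex.moduleCat_exact_iff] at hz2
  refine subsingleton_of_forall_eq 0 fun e => ?_
  obtain ⟨f, hf, rfl⟩ := Q.extMk_surjective e (n + 2) rfl
  rw [Q.extMk_eq_zero_iff f (n + 2) rfl hf n rfl]
  exact hz2 f hf

lemma pd_of_ProjDimLE (X : ModuleCat.{v} R) (n : ℕ) (h : ProjDimLE R n X) :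
    HasProjectiveDimensionLT X (n + 1) := by
  refine hasProjectiveDimensionLT_of_enoughInjectives X (n + 1) fun Y => ?_
  exact subsingleton_ext X Y n (h Y (n + 1) (by lia))

lemma id_of_InjDimLE (X : ModuleCat.{v} R) (n : ℕ) (h : InjDimLE R n X) :
    HasInjectiveDimensionLT X (n + 1) := by
  refine hasInjectiveDimensionLT_of_enoughProjectives X (n + 1) fun Y => ?_
  exact subsingleton_ext Y X n (h Y (n + 1) (by lia))

/-- Finite projective dimension is at most one. -/
lemma pd_le_one (hproj : ∀ P : ModuleCat.{v} R, Projective P → HasInjectiveDimensionLT P 2)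
    (X : ModuleCat.{v} R) (n : ℕ) (h : HasProjectiveDimensionLT X (n + 2)) :
    HasProjectiveDimensionLT X 2 := by
  induction n with
  | zero => exact h
  | succ n ih =>
    apply ih
    refine hasProjectiveDimensionLT_of_enoughInjectives X (n + 2) fun Y => ?_
    refine subsingleton_of_forall_eq 0 fun e => ?_
    have hS : (ShortComplex.mk (kernel.ι (Projective.π Y)) (Projective.π Y)
        (kernel.condition _)).ShortExact :=
      { exact := ShortComplex.exact_kernel _ }
    have h0 : e.comp hS.extClass (rfl : n + 2 + 1 = n + 3) = 0 :=
      Ext.eq_zero_of_hasProjectiveDimensionLT _ (n + 1 + 2) (by lia)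
    obtain ⟨a, ha⟩ := Ext.covariant_sequence_exact₃ _ hS e rfl h0
    have := hproj (Projective.over Y) inferInstance
    have ha0 : a = 0 := Ext.eq_zero_of_hasInjectiveDimensionLT a 2 (by lia)
    rw [← ha, ha0, Ext.zero_comp]

/-- Finite injective dimension forces projective dimension at most one. -/
lemma pd_of_id (hinj : ∀ I : ModuleCat.{v} R, Injective I → HasProjectiveDimensionLT I 2)
    (n : ℕ) (X : ModuleCat.{v} R) (h : HasInjectiveDimensionLT X (n + 1)) :
    HasProjectiveDimensionLT X 2 := by
  induction n generalizing X with
  | zero => exact hinj X (injective_iff_hasInjectiveDimensionLT_one.mpr h)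
  | succ n ih =>
    have hS : (ShortComplex.mk (Injective.ι X) (cokernel.π (Injective.ι X))
        (cokernel.condition _)).ShortExact :=
      { exact := ShortComplex.exact_cokernel _ }
    have h3 := (hS.hasInjectiveDimensionLT_X₃_iff n inferInstance).mpr h
    have := ih _ h3
    exact hS.hasProjectiveDimensionLT_X₁ 2 (hinj _ inferInstance)
      (hasProjectiveDimensionLT_of_ge _ 2 3 (by lia))

/-- The kernel of a projective onto a module of projective dimension at most one. -/
lemma projective_of_pd (P : Type v) [AddCommGroup P] [Module R P] (hP : Module.Projective R P)
    (K : Submodule R P) (h : HasProjectiveDimensionLT (ModuleCat.of R (P ⧸ K)) 2) :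
    Module.Projective R K := by
  have hP' : Projective (ModuleCat.of R P) := 
    (IsProjective.iff_projective (R := R) P).mp hP
  let S : ShortComplex (ModuleCat.{v} R) :=
    ShortComplex.mk (ModuleCat.ofHom K.subtype) (ModuleCat.ofHom K.mkQ) (by
      ext x
      simp)
  have hS : S.ShortExact :=
    { exact := by
        rw [ShortComplex.moduleCat_exact_iff]
        intro x hx
        exact ⟨⟨x, (Submodule.Quotient.mk_eq_zero K).mp hx⟩, rfl⟩
      mono_f := (ModuleCat.mono_iff_injective _).mpr K.injective_subtype
      epi_g := (ModuleCat.epi_iff_surjective _).mpr K.mkQ_surjective }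
  have h1 := (hS.hasProjectiveDimensionLT_X₃_iff 0 hP').mp h
  have h2 : Projective (ModuleCat.of R K) := projective_iff_hasProjectiveDimensionLT_one.mpr h1
  exact (IsProjective.iff_projective (R := R) K).mpr h2

end RadAux

/-- Let `R` be a ring such that every projective left `R`-module has injective dimension
at most 1 and every injective left `R`-module has projective dimension at most 1
(Gorenstein of Gorenstein dimension at most 1), let `J` be the Jacobson radical of `R`
and `P` a projective left `R`-module. Then either `J • P` is projective, or `P / J•P`
has infinite projective dimension and infinite injective dimension. -/
theorem radical_projective_or_top_infinite_dims (R : Type u) [Ring R]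
    (hproj : ∀ P : ModuleCat.{u} R, Projective P → InjDimLE R 1 P)
    (hinj : ∀ I : ModuleCat.{u} R, Injective I → ProjDimLE R 1 I)
    (P : Type u) [AddCommGroup P] [Module R P] (hP : Module.Projective R P) :
    Module.Projective R (radSMul R P) ∨
      ((¬ ∃ m : ℕ, ProjDimLE R m (ModuleCat.of R (P ⧸ radSMul R P))) ∧
        (¬ ∃ m : ℕ, InjDimLE R m (ModuleCat.of R (P ⧸ radSMul R P)))) := by
  have hp : ∀ P : ModuleCat.{u} R, Projective P → HasInjectiveDimensionLT P 2 :=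
    fun P h => RadAux.id_of_InjDimLE P 1 (hproj P h)
  have hi : ∀ I : ModuleCat.{u} R, Injective I → HasProjectiveDimensionLT I 2 :=
    fun I h => RadAux.pd_of_ProjDimLE I 1 (hinj I h)
  by_cases hJ : Module.Projective R (radSMul R P)
  · exact Or.inl hJ
  · refine Or.inr ⟨?_, ?_⟩
    · rintro ⟨m, hm⟩
      have h1 := RadAux.pd_of_ProjDimLE _ m hm
      exact hJ (RadAux.projective_of_pd P hP _ (RadAux.pd_le_one hp _ m
        (hasProjectiveDimensionLT_of_ge _ (m + 1) (m + 2) (by lia))))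
    · rintro ⟨m, hm⟩
      exact hJ (RadAux.projective_of_pd P hP _ (RadAux.pd_of_id hi m _
        (RadAux.id_of_InjDimLE _ m hm)))
end
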